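/- arXiv:1606.01914 — 2 statements merged into one kernel-verified Lean document; each statement's English description precedes it below -/
import Mathlib

section
/- Let N ≥ 2. For every Dynkin label λ : {1, …, N−1} → ℕ, the quadratic Casimir eigenvalue satisfies the lower bound c₂(λ) ≥ ((N²−1)/(2N²)) · Σ_{i=1}^{N−1} λ_i, i.e. c₂(λ) ≥ Δ_N ‖λ‖₁ with Δ_N := (N²−1)/(2N²). -/
/-!
Write `b = j + 1` for the label of the column `j` of the inverse Cartan matrix `B`. Then
`B j j = b (N - b) / N`, and the `j`-th column sums to `b (N - b) / 2`
(`sum_invCartanMatrix_col`). Since the entries of `B` are nonnegative, dropping the off-diagonal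
terms of the quadratic part and using `λ_j ^ 2 ≥ λ_j` for natural numbers bounds the `j`-th column's
share of `∑ (λ_i + 2) B i j λ_j` from below by
`λ_j (B j j + 2 ∑ i, B i j) = λ_j b (N - b) (N + 1) / N`. Finally `b (N - b) ≥ N - 1` for
`1 ≤ b ≤ N - 1`, which gives `(N ^ 2 - 1) / N * λ_j`; the claim follows by summing over `j`.
-/

open Matrix Finset

/-- The inverse Cartan matrix of su(N): B_{ij} = i(N−j)/N if i ≤ j and
B_{ij} = j(N−i)/N if i > j, where indices run over {1,…,N−1}
(`i : Fin (N-1)` corresponds to the label `i+1`). -/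
noncomputable def invCartanMatrix (N : ℕ) : Matrix (Fin (N - 1)) (Fin (N - 1)) ℝ :=
  Matrix.of fun i j =>
    if (i : ℕ) ≤ (j : ℕ) then ((i : ℕ) + 1 : ℝ) * ((N : ℝ) - ((j : ℕ) + 1)) / N
    else ((j : ℕ) + 1 : ℝ) * ((N : ℝ) - ((i : ℕ) + 1)) / N

/-- The quadratic Casimir eigenvalue of the irreducible su(N) representation with
Dynkin label λ : {1,…,N−1} → ℕ:  c₂(λ) = (1/(2N)) Σ_{i,j} (λ_i + 2) B_{ij} λ_j,
where B is the inverse Cartan matrix. -/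
noncomputable def casimirEigenvalue (N : ℕ) (lam : Fin (N - 1) → ℕ) : ℝ :=
  (1 / (2 * (N : ℝ))) *
    ∑ i, ∑ j, ((lam i : ℝ) + 2) * invCartanMatrix N i j * (lam j : ℝ)

/-- The sum over the rows on or above the diagonal, where the entries are linear in `i + 1`. -/
lemma sum_range_col_le (c : ℝ) (j : ℕ) (m : ℕ) (hm : m ≤ j + 1) (d : ℕ → ℝ) :
    ∑ i ∈ Finset.range m, (if i ≤ j then ((i : ℝ) + 1) * c else d i) = m * (m + 1) / 2 * c := by
  induction m with
  | zero => simp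
  | succ k ih =>
    rw [Finset.sum_range_succ, ih (by omega), if_pos (by omega)]
    push_cast
    ring

/-- The partial sums of a column at and beyond the diagonal entry. -/
lemma sum_range_col (n : ℝ) (j : ℕ) (m : ℕ) (hm : j + 1 ≤ m) :
    ∑ i ∈ Finset.range m, (if i ≤ j then ((i : ℝ) + 1) * ((n - (j + 1)) / n)
        else ((j : ℝ) + 1) * (n - (i + 1)) / n) =
      ((j : ℝ) + 1) * (j + 2) / 2 * ((n - (j + 1)) / n)
        + (j + 1) / n * ((m - (j + 1)) * (2 * n - m - (j + 1) - 1) / 2) := by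
  induction m, hm using Nat.le_induction with
  | base =>
    rw [sum_range_col_le _ _ _ le_rfl]
    push_cast
    ring
  | succ k hk ih =>
    rw [Finset.sum_range_succ, ih, if_neg (by omega)]
    push_cast
    ring

lemma sum_invCartanMatrix_col (N : ℕ) (hN : 2 ≤ N) (j : Fin (N - 1)) :
    ∑ i, invCartanMatrix N i j = ((j : ℕ) + 1 : ℝ) * ((N : ℝ) - ((j : ℕ) + 1)) / 2 := by
  have hN0 : (N : ℝ) ≠ 0 := by positivity
  have h := sum_range_col (N : ℝ) j (N - 1) (by omega)
  rw [Finset.sum_range] at h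
  simp only [invCartanMatrix, Matrix.of_apply]
  simp only [mul_div_assoc] at h ⊢
  rw [h, Nat.cast_sub (by omega)]
  field_simp
  push_cast
  ring

lemma invCartanMatrix_nonneg (N : ℕ) (i j : Fin (N - 1)) : 0 ≤ invCartanMatrix N i j := by
  have key (k : Fin (N - 1)) : (0 : ℝ) ≤ (N : ℝ) - ((k : ℕ) + 1) := by
    have : (k : ℕ) + 1 ≤ N := by omega
    rw [sub_nonneg]
    exact_mod_cast this
  have hi := key i
  have hj := key j
  simp only [invCartanMatrix, Matrix.of_apply]
  split_ifs <;> positivity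

/-- The contribution of the column `j` to the Casimir double sum. -/
lemma col_bound (N : ℕ) (hN : 2 ≤ N) (lam : Fin (N - 1) → ℕ) (j : Fin (N - 1)) :
    ((N : ℝ) ^ 2 - 1) / N * (lam j : ℝ) ≤
      ∑ i, ((lam i : ℝ) + 2) * invCartanMatrix N i j * (lam j : ℝ) := by
  have hN0 : (0 : ℝ) < N := by positivity
  have hdiag : (lam j : ℝ) * invCartanMatrix N j j ≤ ∑ i, (lam i : ℝ) * invCartanMatrix N i j :=
    Finset.single_le_sum (f := fun i => (lam i : ℝ) * invCartanMatrix N i j)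
      (fun i _ => mul_nonneg (Nat.cast_nonneg _) (invCartanMatrix_nonneg N i j))
      (Finset.mem_univ j)
  have hsplit : ∑ i, ((lam i : ℝ) + 2) * invCartanMatrix N i j * (lam j : ℝ) =
      (∑ i, (lam i : ℝ) * invCartanMatrix N i j + 2 * ∑ i, invCartanMatrix N i j) * lam j := by
    rw [Finset.mul_sum, ← Finset.sum_add_distrib, Finset.sum_mul]
    exact Finset.sum_congr rfl fun i _ => by ring
  rw [hsplit]
  rcases Nat.eq_zero_or_pos (lam j) with h0 | hpos
  · simp [h0]
  refine mul_le_mul_of_nonneg_right ?_ (Nat.cast_nonneg _)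
  have h1 : (1 : ℝ) ≤ lam j := by exact_mod_cast hpos
  have hBjj : invCartanMatrix N j j ≤ (lam j : ℝ) * invCartanMatrix N j j :=
    le_mul_of_one_le_left (invCartanMatrix_nonneg N j j) h1
  have hjj : invCartanMatrix N j j = ((j : ℕ) + 1 : ℝ) * ((N : ℝ) - ((j : ℕ) + 1)) / N := by
    simp [invCartanMatrix]
  have hj : ((j : ℕ) : ℝ) + 2 ≤ N := by
    have : (j : ℕ) + 2 ≤ N := by omega
    exact_mod_cast this
  -- With `b = j + 1`, this is `(b - 1) * (N - b - 1) ≥ 0`.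
  have hconc : (N : ℝ) - 1 ≤ ((j : ℕ) + 1 : ℝ) * ((N : ℝ) - ((j : ℕ) + 1)) := by
    nlinarith [mul_nonneg (Nat.cast_nonneg (α := ℝ) (j : ℕ)) (sub_nonneg.2 hj)]
  calc ((N : ℝ) ^ 2 - 1) / N = (N - 1) * ((N + 1) / N) := by ring
    _ ≤ ((j : ℕ) + 1 : ℝ) * ((N : ℝ) - ((j : ℕ) + 1)) * ((N + 1) / N) :=
        mul_le_mul_of_nonneg_right hconc (by positivity)
    _ = invCartanMatrix N j j + 2 * ∑ i, invCartanMatrix N i j := by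
        rw [hjj, sum_invCartanMatrix_col N hN j]
        field_simp
        ring
    _ ≤ _ := by linarith

/-- The quadratic Casimir eigenvalue of a Dynkin label λ satisfies
c₂(λ) ≥ Δ_N ‖λ‖₁ with Δ_N = (N²−1)/(2N²). -/
theorem casimirEigenvalue_ge_deltaN_mul_sum (N : ℕ) (hN : 2 ≤ N)
    (lam : Fin (N - 1) → ℕ) :
    casimirEigenvalue N lam ≥
      (((N : ℝ) ^ 2 - 1) / (2 * (N : ℝ) ^ 2)) * ∑ i, (lam i : ℝ) := by
  have hN0 : (0 : ℝ) < N := by positivity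
  unfold casimirEigenvalue
  rw [Finset.sum_comm, ge_iff_le]
  calc (((N : ℝ) ^ 2 - 1) / (2 * (N : ℝ) ^ 2)) * ∑ i, (lam i : ℝ)
      = (1 / (2 * (N : ℝ))) * ∑ j, ((N : ℝ) ^ 2 - 1) / N * (lam j : ℝ) := by
        rw [← Finset.mul_sum]
        field_simp
    _ ≤ _ := mul_le_mul_of_nonneg_left
        (Finset.sum_le_sum fun j _ => col_bound N hN lam j) (by positivity)
end

section
/- Let N ≥ 3 and let 1 ≤ α < β ≤ N−1. Then the Dynkin label e_α + e_β (two ones at positions α and β, zeros elsewhere) satisfies c₂(e_α + e_β) ≥ 1, and the inequality is strict, c₂(e_α + e_β) > 1, whenever (α, β) ≠ (1, N−1) (i.e. whenever the label is not that of the adjoint representation). -/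
/-!
The Weyl vector enters the Casimir only through the column sums of the inverse Cartan matrix,
`Σ_i B_{ij} = j (N - j) / 2` (`sum_invCartanMatrix`). Hence, with `a < b` the two labels,
`2 N² c₂(e_a + e_b) = (N + 1) (a (N - a) + b (N - b)) + 2 a (N - b)` (`casimirEigenvalue_pair`).
Since `1 ≤ a, b ≤ N - 1`, both `a (N - a)` and `b (N - b)` are at least `N - 1`, and
`a (N - b) ≥ 1` with equality only for `a = 1`, `b = N - 1`. The lower bound is therefore
`2 (N + 1) (N - 1) + 2 = 2 N²`, with equality only for the adjoint label.
-/

open Matrix Finset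

lemma sum_range_invCartan_left (c : ℝ) (j m : ℕ) (hm : m ≤ j + 1) :
    ∑ i ∈ Finset.range m, (if i ≤ j then ((i : ℝ) + 1) * (c - ((j : ℝ) + 1)) / c
      else ((j : ℝ) + 1) * (c - ((i : ℝ) + 1)) / c)
    = (m : ℝ) * (m + 1) / 2 * (c - ((j : ℝ) + 1)) / c := by
  induction m with
  | zero => simp
  | succ m ih =>
    rw [Finset.sum_range_succ, ih (by omega), if_pos (by omega)]
    push_cast
    ring

/-- The sum of the first `j + 1 + k` entries of column `j`: the increasing entries up to the
diagonal contribute the first term, the `k` decreasing ones after it the second. -/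
lemma sum_range_invCartan (c : ℝ) (j k : ℕ) :
    ∑ i ∈ Finset.range (j + 1 + k), (if i ≤ j then ((i : ℝ) + 1) * (c - ((j : ℝ) + 1)) / c
      else ((j : ℝ) + 1) * (c - ((i : ℝ) + 1)) / c)
    = ((j : ℝ) + 1) * (j + 2) / 2 * (c - ((j : ℝ) + 1)) / c
      + ((j : ℝ) + 1) * (k * (c - ((j : ℝ) + 1)) - k * (k + 1) / 2) / c := by
  induction k with
  | zero =>
    rw [Nat.add_zero, sum_range_invCartan_left c j (j + 1) le_rfl]
    push_cast
    ring
  | succ k ih =>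
    rw [← Nat.add_assoc, Finset.sum_range_succ, ih, if_neg (by omega)]
    push_cast
    ring

/-- Column sums of the inverse Cartan matrix: `Σ_i B_{ij} = j (N - j) / 2` for the 1-based `j`. -/
lemma sum_invCartanMatrix (N : ℕ) (j : Fin (N - 1)) :
    ∑ i, invCartanMatrix N i j = ((j : ℝ) + 1) * ((N : ℝ) - ((j : ℝ) + 1)) / 2 := by
  obtain ⟨k, hk⟩ : ∃ k, N = (j : ℕ) + 1 + k + 1 := ⟨N - (j + 2), by omega⟩
  have hN : (N : ℝ) = (j : ℝ) + 1 + k + 1 := by exact_mod_cast hk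
  simp only [invCartanMatrix, Matrix.of_apply]
  rw [Fin.sum_univ_eq_sum_range (fun i : ℕ => if i ≤ (j : ℕ)
      then ((i : ℝ) + 1) * ((N : ℝ) - (((j : ℕ) : ℝ) + 1)) / N
      else (((j : ℕ) : ℝ) + 1) * ((N : ℝ) - ((i : ℝ) + 1)) / N) (N - 1),
    show Finset.range (N - 1) = Finset.range ((j : ℕ) + 1 + k) by congr 1; omega, sum_range_invCartan, hN]
  have : (j : ℝ) + 1 + k + 1 ≠ 0 := by positivity
  field_simp
  ring

/-- The closed form of `c₂(e_a + e_b)` in the 1-based labels `a = α + 1`, `b = β + 1`. -/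
lemma casimirEigenvalue_pair (N : ℕ) (hN : 3 ≤ N) (α β : Fin (N - 1)) (hαβ : α < β) :
    casimirEigenvalue N (fun j => (if j = α then 1 else 0) + (if j = β then 1 else 0))
    = (((N : ℝ) + 1) * (((α : ℝ) + 1) * (N - ((α : ℝ) + 1)) + ((β : ℝ) + 1) * (N - ((β : ℝ) + 1)))
        + 2 * (((α : ℝ) + 1) * (N - ((β : ℝ) + 1)))) / (2 * (N : ℝ) ^ 2) := by
  have hN0 : (N : ℝ) ≠ 0 := by positivity
  have hlt : (α : ℕ) < (β : ℕ) := hαβ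
  have hcol (j : Fin (N - 1)) :
      ∑ i, ((((if i = α then 1 else 0) + (if i = β then 1 else 0) : ℕ) : ℝ) + 2)
        * invCartanMatrix N i j
      = invCartanMatrix N α j + invCartanMatrix N β j
        + ((j : ℝ) + 1) * ((N : ℝ) - ((j : ℝ) + 1)) := by
    simp only [Nat.cast_add, Nat.cast_ite, Nat.cast_one, Nat.cast_zero, add_mul,
      Finset.sum_add_distrib, ite_mul, one_mul, zero_mul, Finset.sum_ite_eq', Finset.mem_univ,
      if_true, ← Finset.mul_sum, sum_invCartanMatrix]
    ring
  unfold casimirEigenvalue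
  rw [Finset.sum_comm]
  simp only [← Finset.sum_mul, hcol]
  simp only [Nat.cast_add, Nat.cast_ite, Nat.cast_one, Nat.cast_zero, mul_add, mul_ite, mul_one,
    mul_zero, Finset.sum_add_distrib, Finset.sum_ite_eq', Finset.mem_univ, if_true]
  simp only [invCartanMatrix, Matrix.of_apply, le_refl, if_true, if_pos hlt.le,
    if_neg (not_le.mpr hlt)]
  field_simp
  ring

/-- For 1 ≤ α < β ≤ N−1 and N ≥ 3, the Dynkin label e_α + e_β satisfies
c₂(e_α + e_β) ≥ 1, with strict inequality whenever (α, β) ≠ (1, N−1), i.e. whenever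
the label is not that of the adjoint representation. -/
theorem casimirEigenvalue_two_ones (N : ℕ) (hN : 3 ≤ N)
    (α β : Fin (N - 1)) (hαβ : α < β) :
    1 ≤ casimirEigenvalue N
        (fun j => (if j = α then 1 else 0) + (if j = β then 1 else 0)) ∧
    (¬((α : ℕ) + 1 = 1 ∧ (β : ℕ) + 1 = N - 1) →
      1 < casimirEigenvalue N
        (fun j => (if j = α then 1 else 0) + (if j = β then 1 else 0))) := by
  have hlt : (α : ℕ) < (β : ℕ) := hαβ
  have hβ := β.isLt
  have hN0 : (0 : ℝ) < 2 * (N : ℝ) ^ 2 := by positivity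
  have ha : (0 : ℝ) ≤ (α : ℝ) := by positivity
  have hab : (α : ℝ) + 1 ≤ (β : ℝ) := by exact_mod_cast hlt
  have hbN : (β : ℝ) + 2 ≤ (N : ℝ) := by exact_mod_cast (by omega : (β : ℕ) + 2 ≤ N)
  have hN1 : (0 : ℝ) ≤ (N : ℝ) + 1 := by positivity
  -- `x (N - x) - (N - 1) = (x - 1) (N - 1 - x)` is nonnegative for `1 ≤ x ≤ N - 1`.
  have h1 : (N : ℝ) - 1 ≤ ((α : ℝ) + 1) * (N - ((α : ℝ) + 1)) := by
    nlinarith [mul_nonneg ha (by linarith : (0 : ℝ) ≤ N - (α + 2))]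
  have h2 : (N : ℝ) - 1 ≤ ((β : ℝ) + 1) * (N - ((β : ℝ) + 1)) := by
    nlinarith [mul_nonneg (by linarith : (0 : ℝ) ≤ (β : ℝ))
      (by linarith : (0 : ℝ) ≤ (N : ℝ) - (β + 2))]
  have h3 := mul_le_mul_of_nonneg_left (add_le_add h1 h2) hN1
  have h4 : (0 : ℝ) ≤ (α : ℝ) * (N - (β + 2)) := mul_nonneg ha (by linarith)
  rw [casimirEigenvalue_pair N hN α β hαβ, le_div_iff₀ hN0, lt_div_iff₀ hN0]
  refine ⟨by nlinarith, fun hne => ?_⟩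
  have h5 : (1 : ℝ) ≤ (α : ℝ) + (N - (β + 2)) := by
    have : (β : ℕ) + 3 ≤ (α : ℕ) + N := by omega
    have : (β : ℝ) + 3 ≤ (α : ℝ) + N := by exact_mod_cast this
    linarith
  nlinarith
end
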